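/- Let D ≥ 2. Every pair of polynomial vector fields (P, P̄) satisfying the system (S): ∂_μ P_ν = ∂_ν P̄_μ for all μ, ν and Σ_μ ∂^μ P_μ = Σ_μ ∂^μ P̄_μ, can be written in exactly one way as P_μ = ∂_μ R + Σ_ν ξ_{μν} x^ν + c_μ and P̄_μ = ∂_μ R − Σ_ν ξ_{μν} x^ν − c_μ, where R is a polynomial with zero constant term, ξ = (ξ_{μν}) is an antisymmetric D×D complex matrix, and c ∈ ℂ^D. In particular the pairs (ξ·x + c, −ξ·x − c) with ξ antisymmetric represent the nontrivial solutions of (S). -/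

import Mathlib

open MvPolynomial

/-- The partial derivative `∂_μ` on `ℂ[x^0, …, x^{D-1}]`, as a linear map. -/
noncomputable def pd (D : ℕ) (μ : Fin D) :
    MvPolynomial (Fin D) ℂ →ₗ[ℂ] MvPolynomial (Fin D) ℂ :=
  (pderiv μ).toLinearMap

/-- The raised-index derivative `∂^μ = η^{μμ} ∂_μ` for the Minkowski metric
`η = diag(-1, 1, …, 1)` (no sum over `μ`). -/
noncomputable def pdU (D : ℕ) (μ : Fin D) :
    MvPolynomial (Fin D) ℂ →ₗ[ℂ] MvPolynomial (Fin D) ℂ :=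
  (if (μ : ℕ) = 0 then (-1 : ℂ) else 1) • pd D μ

theorem pd_apply {D : ℕ} (μ : Fin D) (p : MvPolynomial (Fin D) ℂ) :
    pd D μ p = pderiv μ p := rfl

theorem pd_ext {D : ℕ} {p q : MvPolynomial (Fin D) ℂ} (h0 : p.coeff 0 = q.coeff 0)
    (h : ∀ μ, pd D μ p = pd D μ q) : p = q := by
  ext m
  by_cases hm : m = 0
  · rw [hm, h0]
  · obtain ⟨i, hi⟩ : ∃ i, m i ≠ 0 := by
      by_contra! hc
      exact hm (Finsupp.ext hc)
    have hle : Finsupp.single i 1 ≤ m := by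
      rw [Finsupp.single_le_iff]; omega
    have h1 := congrArg (coeff (m - Finsupp.single i 1)) (h i)
    simp only [pd_apply, coeff_pderiv,
      tsub_add_cancel_of_le hle] at h1
    exact mul_right_cancel₀ (Nat.cast_add_one_ne_zero _) h1

theorem pd_comm {D : ℕ} (μ ν : Fin D) (p : MvPolynomial (Fin D) ℂ) :
    pd D μ (pd D ν p) = pd D ν (pd D μ p) := by
  ext m
  simp only [pd_apply, coeff_pderiv]
  by_cases h : μ = ν
  · subst h; rfl
  · have h' : ν ≠ μ := fun e => h e.symm
    rw [add_right_comm]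
    simp [Finsupp.single_apply, h, h']
    ring

theorem pd_lin {D : ℕ} (f : Fin D → ℂ) (c : ℂ) (ν : Fin D) :
    pd D ν ((∑ i, C (f i) * X i) + C c) = C (f ν) := by
  simp [pd, pderiv_X, Pi.single_apply]

theorem coeff_lin {D : ℕ} (f : Fin D → ℂ) (c : ℂ) :
    coeff 0 ((∑ i, C (f i) * X i) + C c) = c := by
  simp [coeff_sum]

noncomputable def hom (D : ℕ) (k : ℕ) : MvPolynomial (Fin D) ℂ →ₗ[ℂ] MvPolynomial (Fin D) ℂ :=
  (basisMonomials (Fin D) ℂ).constr ℂ (fun m => monomial m (((m.degree + k : ℕ) : ℂ)⁻¹))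

theorem hom_monomial {D : ℕ} (k : ℕ) (m : Fin D →₀ ℕ) (a : ℂ) :
    hom D k (monomial m a) = monomial m (a * ((m.degree + k : ℕ) : ℂ)⁻¹) := by
  have h : monomial m a = a • basisMonomials (Fin D) ℂ m := by
    simp [coe_basisMonomials, smul_monomial]
  rw [h, map_smul, hom, Module.Basis.constr_basis, smul_monomial, smul_eq_mul]

theorem coeff_hom {D : ℕ} (k : ℕ) (m : Fin D →₀ ℕ) (p : MvPolynomial (Fin D) ℂ) :
    coeff m (hom D k p) = coeff m p * ((m.degree + k : ℕ) : ℂ)⁻¹ := by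
  induction p using MvPolynomial.induction_on' with
  | add p q hp hq => simp [hp, hq, add_mul]
  | monomial n a =>
    rw [hom_monomial, coeff_monomial, coeff_monomial]
    split_ifs with h
    · rw [h]
    · simp

theorem pd_hom {D : ℕ} (k : ℕ) (ν : Fin D) (p : MvPolynomial (Fin D) ℂ) :
    pd D ν (hom D k p) = hom D (k + 1) (pd D ν p) := by
  ext m
  rw [coeff_hom]
  simp only [pd_apply, coeff_pderiv]
  rw [coeff_hom, map_add, Finsupp.degree_single, add_assoc, add_comm 1 k]
  ring

theorem euler {D : ℕ} (p : MvPolynomial (Fin D) ℂ) :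
    hom D 1 p + ∑ μ, X μ * pd D μ (hom D 1 p) = p := by
  induction p using MvPolynomial.induction_on' with
  | add p q hp hq =>
    conv_rhs => rw [← hp, ← hq]
    simp only [map_add, mul_add, Finset.sum_add_distrib]
    ring
  | monomial n a =>
    simp only [hom_monomial, pd_apply,
      X_mul_pderiv_monomial]
    rw [← Finset.sum_smul, ← Finsupp.degree_eq_sum, ← map_nsmul, ← map_add]
    congr 1
    have : ((n.degree + 1 : ℕ) : ℂ) ≠ 0 := Nat.cast_ne_zero.2 (by omega)
    rw [nsmul_eq_mul]
    field_simp
    push_cast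
    ring

theorem poincare {D : ℕ} (S : Fin D → MvPolynomial (Fin D) ℂ)
    (hS : ∀ μ ν, pd D μ (S ν) = pd D ν (S μ)) :
    ∃ R : MvPolynomial (Fin D) ℂ, R.coeff 0 = 0 ∧ ∀ μ, S μ = pd D μ R := by
  refine ⟨∑ μ, X μ * hom D 1 (S μ), by simp [coeff_sum, coeff_X_mul'], fun ν => ?_⟩
  have h : ∀ μ, pd D ν (X μ * hom D 1 (S μ)) =
      (if μ = ν then hom D 1 (S μ) else 0) + X μ * pd D μ (hom D 1 (S ν)) := by
    intro μ
    rw [pd_hom, hS, ← pd_hom]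
    simp only [pd_apply, pderiv_mul, pderiv_X,
      Pi.single_apply]
    split_ifs with h1 h2 h2 <;> simp_all
  rw [map_sum, Finset.sum_congr rfl (fun μ _ => h μ), Finset.sum_add_distrib]
  simp [euler]

theorem killing {D : ℕ} (A : Fin D → MvPolynomial (Fin D) ℂ)
    (hA : ∀ μ ν, pd D μ (A ν) = - pd D ν (A μ)) (μ ν : Fin D) :
    pd D ν (A μ) = C (coeff 0 (pd D ν (A μ))) := by
  refine pd_ext (by simp) fun l => ?_
  have e1 : ∀ a b c, pd D a (pd D b (A c)) = - pd D a (pd D c (A b)) := by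
    intro a b c; rw [hA b c, map_neg]
  have h : pd D l (pd D ν (A μ)) = - pd D l (pd D ν (A μ)) := by
    calc pd D l (pd D ν (A μ)) = - pd D l (pd D μ (A ν)) := e1 _ _ _
      _ = - pd D μ (pd D l (A ν)) := by rw [pd_comm]
      _ = pd D μ (pd D ν (A l)) := by rw [e1 μ l ν, neg_neg]
      _ = pd D ν (pd D μ (A l)) := by rw [pd_comm]
      _ = - pd D ν (pd D l (A μ)) := e1 _ _ _
      _ = - pd D l (pd D ν (A μ)) := by rw [pd_comm]
  rw [self_eq_neg.1 h]
  simp [pd]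

/-- Structure of the solutions of the system (S): every solution `(P, P̄)` of
`∂_μ P_ν = ∂_ν P̄_μ`, `Σ_μ ∂^μ P_μ = Σ_μ ∂^μ P̄_μ` decomposes uniquely as
`P_μ = ∂_μ R + Σ_ν ξ_{μν} x^ν + c_μ`, `P̄_μ = ∂_μ R − Σ_ν ξ_{μν} x^ν − c_μ`
with `R` a polynomial with zero constant term, `ξ` an antisymmetric complex `D×D` matrix and
`c ∈ ℂ^D`. -/
theorem solutions_unique_decomposition (D : ℕ) (hD : 2 ≤ D)
    (P Pb : Fin D → MvPolynomial (Fin D) ℂ)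
    (hS1 : ∀ μ ν, pd D μ (P ν) = pd D ν (Pb μ))
    (hS2 : (∑ μ, pdU D μ (P μ)) = ∑ μ, pdU D μ (Pb μ)) :
    ∃! t : MvPolynomial (Fin D) ℂ × Matrix (Fin D) (Fin D) ℂ × (Fin D → ℂ),
      t.1.coeff 0 = 0 ∧
      (∀ μ ν, t.2.1 μ ν = - t.2.1 ν μ) ∧
      (∀ μ, P μ = pd D μ t.1 + (∑ ν, MvPolynomial.C (t.2.1 μ ν) * X ν)
        + MvPolynomial.C (t.2.2 μ)) ∧
      (∀ μ, Pb μ = pd D μ t.1 - (∑ ν, MvPolynomial.C (t.2.1 μ ν) * X ν)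
        - MvPolynomial.C (t.2.2 μ)) := by
  have two : ∀ p : MvPolynomial (Fin D) ℂ, (2⁻¹ : ℂ) • (p + p) = p := by
    intro p
    rw [← two_smul ℂ p, smul_smul]; norm_num
  have half : ∀ {p q : MvPolynomial (Fin D) ℂ}, p + p = q + q → p = q := by
    intro p q h
    rw [← two p, h, two]
  let S : Fin D → MvPolynomial (Fin D) ℂ := fun μ => (2⁻¹ : ℂ) • (P μ + Pb μ)
  let A : Fin D → MvPolynomial (Fin D) ℂ := fun μ => (2⁻¹ : ℂ) • (P μ - Pb μ)
  have hP : ∀ μ, P μ = S μ + A μ := by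
    intro μ
    simp only [S, A]
    rw [← smul_add, add_add_sub_cancel, two]
  have hPb : ∀ μ, Pb μ = S μ - A μ := by
    intro μ
    simp only [S, A]
    rw [← smul_sub, add_sub_sub_cancel, two]
  have hSc : ∀ μ ν, pd D μ (S ν) = pd D ν (S μ) := by
    intro μ ν
    simp only [S, map_smul, map_add, hS1 μ ν, ← hS1 ν μ]
    rw [add_comm]
  have hAk : ∀ μ ν, pd D μ (A ν) = - pd D ν (A μ) := by
    intro μ ν
    simp only [A, map_smul, map_sub, hS1 μ ν, ← hS1 ν μ]
    rw [← smul_neg, neg_sub]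
  obtain ⟨R, hR0, hR⟩ := poincare S hSc
  have hA : ∀ μ, A μ = (∑ ν, C (coeff 0 (pd D ν (A μ))) * X ν) + C (coeff 0 (A μ)) := by
    intro μ
    refine pd_ext (coeff_lin _ _).symm fun ν => ?_
    rw [pd_lin (fun ν => coeff 0 (pd D ν (A μ)))]
    exact killing A hAk μ ν
  refine ⟨(R, Matrix.of fun μ ν => coeff 0 (pd D ν (A μ)), fun μ => coeff 0 (A μ)),
    ⟨hR0, ?_, ?_, ?_⟩, ?_⟩
  · intro μ ν
    simp only [Matrix.of_apply]
    rw [hAk ν μ, coeff_neg]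
  · intro μ
    simp only [Matrix.of_apply]
    rw [add_assoc, ← hA, ← hR, hP]
  · intro μ
    simp only [Matrix.of_apply]
    rw [sub_sub, ← hA, ← hR, hPb]
  · rintro ⟨R', ξ, c⟩ ⟨h0, -, h1, h2⟩
    simp only at h0 h1 h2
    have hS' : ∀ μ, S μ = pd D μ R' := by
      intro μ
      rw [← two (pd D μ R')]
      simp only [S, h1, h2]
      congr 1
      ring
    have hA' : ∀ μ, A μ = (∑ ν, C (ξ μ ν) * X ν) + C (c μ) := by
      intro μ
      rw [← two ((∑ ν, C (ξ μ ν) * X ν) + C (c μ))]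
      simp only [A, h1, h2]
      congr 1
      ring
    have eR : R' = R := pd_ext (by rw [h0, hR0]) fun μ => by rw [← hS', hR]
    have eξ : ξ = Matrix.of fun μ ν => coeff 0 (pd D ν (A μ)) := by
      ext μ ν
      rw [Matrix.of_apply, hA', pd_lin (fun ν => ξ μ ν), coeff_zero_C]
    have ec : c = fun μ => coeff 0 (A μ) := by
      ext μ
      rw [hA', coeff_lin]
    rw [eR, eξ, ec]
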